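/- arXiv:1105.3818 — 3 statements merged into one kernel-verified Lean document; each statement's English description precedes it below -/
import Mathlib

section
/- For every i ≥ 0, p_i = p_{i+1}; that is, the torsion-free rank of the finitely generated abelian group A_i = Φ(Γ_i) ≅ Γ_i/K_i is the same for all i ≥ 0. -/
/-- The subgroup `2^{-i} ℤ^d` of `ℝ^d`. -/
def binGrid (d i : ℕ) : AddSubgroup (Fin d → ℝ) where
  carrier := {u | ∀ j, ∃ z : ℤ, u j = (z : ℝ) / 2 ^ i}
  zero_mem' := fun j => ⟨0, by simp⟩
  add_mem' := by
    rintro a b ha hb j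
    obtain ⟨za, hza⟩ := ha j
    obtain ⟨zb, hzb⟩ := hb j
    exact ⟨za + zb, by simp [hza, hzb]; ring⟩
  neg_mem' := by
    rintro a ha j
    obtain ⟨z, hz⟩ := ha j
    exact ⟨-z, by simp [hz]; ring⟩

theorem rank_eq_of_two_smul {A B : Type} [AddCommGroup A] [AddCommGroup B] (f : A →+ B)
    (hf : Function.Injective f) (h2 : ∀ b, ∃ a, f a = (2 : ℤ) • b) :
    Module.rank ℤ A = Module.rank ℤ B := by
  have h1 := rank_range_of_injective (f.toIntLinearMap) hf
  have h3 := rank_quotient_add_rank_of_isDomain (LinearMap.range f.toIntLinearMap)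
  have h4 : Module.rank ℤ (B ⧸ LinearMap.range f.toIntLinearMap) = 0 := by
    rw [rank_eq_zero_iff]
    intro x
    obtain ⟨b, rfl⟩ := Submodule.Quotient.mk_surjective _ x
    refine ⟨2, by norm_num, ?_⟩
    rw [← Submodule.Quotient.mk_smul, Submodule.Quotient.mk_eq_zero]
    obtain ⟨a, ha⟩ := h2 b
    exact ⟨a, ha⟩
  rw [h4, zero_add] at h3
  rw [← h3]
  exact h1.symm

theorem binGrid_le_succ (d i : ℕ) : binGrid d i ≤ binGrid d (i + 1) := by
  intro u hu j
  obtain ⟨z, hz⟩ := hu j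
  exact ⟨2 * z, by rw [hz, pow_succ]; push_cast; field_simp⟩

theorem binGrid_two_smul (d i : ℕ) (u : Fin d → ℝ) (hu : u ∈ binGrid d (i + 1)) :
    (2 : ℤ) • u ∈ binGrid d i := by
  intro j
  obtain ⟨z, hz⟩ := hu j
  refine ⟨z, ?_⟩
  simp only [Pi.smul_apply, zsmul_eq_mul, hz, pow_succ]
  push_cast
  field_simp

/-- the torsion-free rank `p i` of `A_i ≅ Γ_i / K_i` is the same for all `i`. -/
theorem rank_quotient_binGrid_succ
    (d : ℕ) (hd : 1 ≤ d) (G : Type*) [Group G]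
    (Φ : (Fin d → ℝ) → G) (hΦ : ∀ u v, Φ (u + v) = Φ u * Φ v)
    (K : (i : ℕ) → AddSubgroup (binGrid d i))
    (hK : ∀ (i : ℕ) (u : binGrid d i), u ∈ K i ↔ Φ (u : Fin d → ℝ) = 1)
    (p : ℕ → Cardinal)
    (hp : ∀ i, p i = Module.rank ℤ ((binGrid d i) ⧸ K i)) :
    ∀ i : ℕ, p i = p (i + 1) := by
  intro i
  rw [hp, hp]
  have hc : K i = (K (i + 1)).comap (AddSubgroup.inclusion (binGrid_le_succ d i)) := by
    ext u
    rw [AddSubgroup.mem_comap, hK, hK]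
    rfl
  let f := QuotientAddGroup.map (K i) (K (i + 1))
    (AddSubgroup.inclusion (binGrid_le_succ d i)) hc.le
  have h := rank_eq_of_two_smul f ?_ ?_
  · exact h
  · rw [injective_iff_map_eq_zero]
    intro x hx
    obtain ⟨u, rfl⟩ := QuotientAddGroup.mk_surjective x
    rw [QuotientAddGroup.eq_zero_iff, hc, AddSubgroup.mem_comap]
    exact (QuotientAddGroup.eq_zero_iff _).1 hx
  · intro b
    obtain ⟨u, rfl⟩ := QuotientAddGroup.mk_surjective b
    refine ⟨QuotientAddGroup.mk ⟨_, binGrid_two_smul d i u u.2⟩, ?_⟩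
    rfl
end

section
/- Let {φ_g}_{g∈Γ} be a nonsingular action of an abelian group Γ on a σ-finite measure space (S, 𝒮, μ), and let K := {g ∈ Γ : φ_g = id_S}. Suppose H is a finitely generated torsion-free subgroup of Γ with H ∩ K = {0} whose action {φ_h}_{h∈H} is conservative, r ≥ 1 is an integer, and H' is a subgroup of Γ such that r·H ⊆ H' + K (for every h ∈ H there exist h' ∈ H' and w ∈ K with r·h = h' + w). Then the action {φ_h}_{h∈H'} is conservative. -/
open MeasureTheory

/-- let `{φ_g}` be a nonsingular action of a countable abelian group `Γ` on a
σ-finite measure space, `K = {g : φ_g = id}`. If `H` is a finitely generated torsion-free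
subgroup of `Γ` with `H ∩ K = {0}` whose action is conservative, `r ≥ 1`, and `H'` is a
subgroup with `r·H ⊆ H' + K`, then the action of `H'` is conservative. -/
theorem conservative_of_conservative_subgroup
    (Γ : Type*) [AddCommGroup Γ] [Countable Γ]
    (S : Type*) [MeasurableSpace S] (μ : Measure S) [SigmaFinite μ]
    (φ : Γ → S → S)
    (hmeas : ∀ g, Measurable (φ g))
    (hid : φ 0 = id)
    (hadd : ∀ g h, φ (g + h) = φ g ∘ φ h)
    (hns : ∀ g, ∀ A : Set S, MeasurableSet A → (μ (φ g '' A) = 0 ↔ μ A = 0))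
    (K : AddSubgroup Γ) (hK : ∀ g, g ∈ K ↔ φ g = id)
    (H : AddSubgroup Γ) (hHfg : H.FG)
    (hHtf : ∀ h ∈ H, ∀ n : ℕ, 0 < n → n • h = 0 → h = 0)
    (hHK : H ⊓ K = ⊥)
    (hHcons : ¬ ∃ W : Set S, MeasurableSet W ∧ 0 < μ W ∧
        ∀ g ∈ H, ∀ h ∈ H, g ≠ h → Disjoint (φ g '' W) (φ h '' W))
    (r : ℕ) (hr : 1 ≤ r)
    (H' : AddSubgroup Γ)
    (hrH : ∀ h ∈ H, ∃ h' ∈ H', ∃ w ∈ K, r • h = h' + w) :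
    ¬ ∃ W : Set S, MeasurableSet W ∧ 0 < μ W ∧
        ∀ g ∈ H', ∀ h ∈ H', g ≠ h → Disjoint (φ g '' W) (φ h '' W) := by
  rintro ⟨W, hWm, hWpos, hW⟩
  have hinv : ∀ g x, φ (-g) (φ g x) = x := by
    intro g x
    have := congrFun (hadd (-g) g) x
    simpa [hid] using this.symm
  have key : ∀ h ∈ H, h ≠ 0 → ∀ x ∈ W, φ (r • h) x ∉ W := by
    intro h hh h0 x hx hx'
    obtain ⟨h', hh', w, hw, e⟩ := hrH h hh
    have hne : h' ≠ 0 := by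
      rintro rfl
      rw [zero_add] at e
      have h1 : r • h ∈ H ⊓ K := ⟨H.nsmul_mem hh r, e ▸ hw⟩
      rw [hHK, AddSubgroup.mem_bot] at h1
      exact h0 (hHtf h hh r hr h1)
    have hφ : φ (r • h) = φ h' := by
      rw [e, hadd, (hK w).1 hw]; rfl
    have hd := hW h' hh' 0 H'.zero_mem hne
    rw [hid, Set.image_id] at hd
    refine Set.disjoint_left.1 hd ⟨x, hx, rfl⟩ ?_
    rw [← hφ]; exact hx'
  haveI : NeZero r := ⟨by omega⟩
  haveI : Module.Finite ℤ H := by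
    rw [Module.Finite.iff_addGroup_fg]
    exact (AddGroup.fg_iff_addSubgroup_fg H).2 hHfg
  haveI : IsAddTorsionFree H := by
    refine ⟨fun n hn a b hab => ?_⟩
    have hab' : n • a = n • b := hab
    have h1 : n • (a - b) = 0 := by rw [nsmul_sub, hab', sub_self]
    have h2 := hHtf (a - b : H) (a - b).2 n (Nat.pos_of_ne_zero hn)
      (by simpa using congrArg Subtype.val h1)
    exact sub_eq_zero.1 (Subtype.ext h2)
  let e := (Module.finBasis ℤ H).equivFun
  let ord : H → Lex (Fin (Module.finrank ℤ H) → ℤ) := fun h => toLex (e h)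
  have ord_add : ∀ a b, ord (a + b) = ord a + ord b := by
    intro a b; simp only [ord, map_add]; rfl
  have ord_neg : ∀ a, ord (-a) = - ord a := by
    intro a; simp only [ord, map_neg]; rfl
  have ord_zero : ∀ a, ord a = 0 → a = 0 := by
    intro a ha
    have : e a = 0 := ha
    simpa using this
  let W' : Set S := W ∩ ⋂ h : H, ⋂ (_ : 0 < ord h), (φ h ⁻¹' W)ᶜ
  have memW' : ∀ x, x ∈ W' ↔ x ∈ W ∧ ∀ h : H, 0 < ord h → φ h x ∉ W := by
    intro x; simp [W']
  have hW'm : MeasurableSet W' := by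
    refine hWm.inter (MeasurableSet.iInter fun h => MeasurableSet.iInter fun _ => ?_)
    exact ((hmeas h) hWm).compl
  have hfin : ∀ x, {h : H | φ h x ∈ W}.Finite := by
    intro x
    refine Set.Finite.of_injOn (f := fun h : H => fun i => ((e h i : ℤ) : ZMod r))
      (t := Set.univ) (fun _ _ => Set.mem_univ _) ?_ Set.finite_univ
    intro a ha b hb hab
    by_contra hne
    have hdvd : ∀ i, ∃ c : ℤ, e a i - e b i = r * c := by
      intro i
      have h1 : ((e b i : ℤ) : ZMod r) = ((e a i : ℤ) : ZMod r) := (congrFun hab i).symm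
      exact (ZMod.intCast_eq_intCast_iff_dvd_sub _ _ r).1 h1
    choose c hc using hdvd
    have hsub : a - b = r • e.symm c := by
      apply e.injective
      ext i
      simp [hc]
    have hc0 : (e.symm c) ≠ 0 := by
      intro h0
      rw [h0, smul_zero] at hsub
      exact hne (sub_eq_zero.1 hsub)
    refine key (e.symm c : H) (e.symm c).2 (fun h => hc0 (Subtype.ext h)) (φ b x) hb ?_
    have h2 : (r • ((e.symm c : H) : Γ)) + b = a := by
      have := congrArg Subtype.val hsub
      simp only [AddSubgroup.coe_sub, AddSubgroup.coe_nsmul] at this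
      rw [← this]; abel
    have h3 := congrFun (hadd (r • ((e.symm c : H) : Γ)) b) x
    rw [h2] at h3
    have h4 : φ a x ∈ W := ha
    rw [h3] at h4
    exact h4
  apply hHcons
  refine ⟨W', hW'm, ?_, ?_⟩
  · rw [pos_iff_ne_zero]
    intro hz
    refine hWpos.ne' (measure_mono_null (t := ⋃ h : H, φ (-h) '' W') ?_ ?_)
    · intro x hx
      obtain ⟨m, hm, hmax⟩ := Set.exists_max_image _ ord (hfin x)
        ⟨0, by simpa [hid] using hx⟩
      refine Set.mem_iUnion.2 ⟨m, φ m x, (memW' _).2 ⟨hm, ?_⟩, hinv _ _⟩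
      intro h hpos hh
      have h1 := hmax (h + m) (by
        have := congrFun (hadd h m) x
        simpa [this] using hh)
      rw [ord_add] at h1
      exact absurd h1 (not_le.2 (lt_add_of_pos_left _ hpos))
    · rw [measure_iUnion_null_iff]
      exact fun h => (hns _ _ hW'm).2 hz
  · have main : ∀ g h : H, 0 < ord (g - h) → ∀ x ∈ W', ∀ y ∈ W', φ g x ≠ φ h y := by
      intro g h hpos x hx y hy hxy
      refine ((memW' x).1 hx).2 (g - h) hpos ?_
      have h1 : φ ((g - h : H) : Γ) x = y := by
        rw [AddSubgroup.coe_sub, sub_eq_neg_add, hadd, Function.comp_apply, hxy, hinv]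
      rw [h1]
      exact ((memW' y).1 hy).1
    intro g hg h hh hne
    rw [Set.disjoint_left]
    rintro _ ⟨x, hx, rfl⟩ ⟨y, hy, hxy⟩
    rcases lt_trichotomy 0 (ord (⟨g, hg⟩ - ⟨h, hh⟩)) with h1 | h1 | h1
    · exact main ⟨g, hg⟩ ⟨h, hh⟩ h1 x hx y hy hxy.symm
    · have := sub_eq_zero.1 (ord_zero _ h1.symm)
      exact hne (congrArg Subtype.val this)
    · refine main ⟨h, hh⟩ ⟨g, hg⟩ ?_ y hy x hx hxy
      rw [← neg_sub, ord_neg]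
      exact neg_pos.2 h1
end

section
/- Suppose M' is a positive integer and x_1,…,x_l, u_1,…,u_p, v_1,…,v_q are elements of ℤ^d such that for every integer n ≥ M', [−n𝟏, n𝟏] ∩ ℤ^d ⊆ ⋃_{k=1}^{l} { x_k + Σ_{i=1}^p α_i u_i + Σ_{j=1}^q β_j v_j : α_i, β_j ∈ [−M'n, M'n] ∩ ℤ for all i, j }. Set M := max(M', ‖x_1‖_∞, …, ‖x_l‖_∞). Then for every integer n ≥ 1 and every integer m ≥ 0, [−n𝟏, n𝟏] ∩ Γ_m ⊆ { y + Σ_{i=1}^p α_i u_i + Σ_{j=1}^q β_j v_j : y ∈ [−M𝟏, M𝟏] ∩ Γ_m, α_i, β_j ∈ [−Mn, Mn] ∩ 2^{-m}ℤ for all i, j }; consequently [−n𝟏, n𝟏] ∩ Γ ⊆ { y + Σ_{i=1}^p α_i u_i + Σ_{j=1}^q β_j v_j : y ∈ [−M𝟏, M𝟏] ∩ Γ, α_i, β_j ∈ [−Mn, Mn] ∩ ℚ_bin for all i, j }. -/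
/-- from the integer covering property of `[−n𝟏,n𝟏] ∩ ℤ^d` by translates
`x_k + Σ α_i u_i + Σ β_j v_j` with `|α_i|, |β_j| ≤ M'n`, one deduces, with
`M := max(M', ‖x_1‖_∞, …, ‖x_l‖_∞)`, the analogous covering of `[−n𝟏,n𝟏] ∩ Γ_m` for every
`m ≥ 0` (with coefficients in `[−Mn, Mn] ∩ 2^{-m}ℤ` and `y ∈ [−M𝟏,M𝟏] ∩ Γ_m`), and
consequently of `[−n𝟏,n𝟏] ∩ Γ` (with coefficients binary rationals in `[−Mn, Mn]` and
`y ∈ [−M𝟏,M𝟏] ∩ Γ`). -/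
theorem grid_covering_lemma
    (d l p q : ℕ) (M' : ℕ) (hM' : 1 ≤ M')
    (x : Fin l → Fin d → ℤ) (u : Fin p → Fin d → ℤ) (v : Fin q → Fin d → ℤ)
    (hcov : ∀ n : ℕ, M' ≤ n → ∀ t : Fin d → ℤ, (∀ j, |t j| ≤ (n : ℤ)) →
      ∃ k : Fin l, ∃ α : Fin p → ℤ, ∃ β : Fin q → ℤ,
        (∀ i, |α i| ≤ (M' : ℤ) * n) ∧ (∀ j, |β j| ≤ (M' : ℤ) * n) ∧
        t = x k + ∑ i, α i • u i + ∑ j, β j • v j)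
    (M : ℕ)
    (hM : M = max M' (Finset.univ.sup fun k : Fin l =>
      Finset.univ.sup fun j : Fin d => (x k j).natAbs)) :
    (∀ n : ℕ, 1 ≤ n → ∀ m : ℕ, ∀ t : Fin d → ℝ,
      (∀ j, |t j| ≤ (n : ℝ)) → (∀ j, ∃ z : ℤ, t j = (z : ℝ) / 2 ^ m) →
      ∃ y : Fin d → ℝ, ∃ α : Fin p → ℝ, ∃ β : Fin q → ℝ,
        (∀ j, |y j| ≤ (M : ℝ) ∧ ∃ z : ℤ, y j = (z : ℝ) / 2 ^ m) ∧
        (∀ i, |α i| ≤ (M : ℝ) * n ∧ ∃ z : ℤ, α i = (z : ℝ) / 2 ^ m) ∧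
        (∀ j, |β j| ≤ (M : ℝ) * n ∧ ∃ z : ℤ, β j = (z : ℝ) / 2 ^ m) ∧
        t = y + ∑ i, α i • (fun j' => ((u i j' : ℝ))) +
              ∑ j, β j • (fun j' => ((v j j' : ℝ)))) ∧
    (∀ n : ℕ, 1 ≤ n → ∀ t : Fin d → ℝ,
      (∀ j, |t j| ≤ (n : ℝ)) → (∃ m : ℕ, ∀ j, ∃ z : ℤ, t j = (z : ℝ) / 2 ^ m) →
      ∃ y : Fin d → ℝ, ∃ α : Fin p → ℝ, ∃ β : Fin q → ℝ,
        (∀ j, |y j| ≤ (M : ℝ)) ∧ (∃ m : ℕ, ∀ j, ∃ z : ℤ, y j = (z : ℝ) / 2 ^ m) ∧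
        (∀ i, |α i| ≤ (M : ℝ) * n ∧ ∃ m : ℕ, ∃ z : ℤ, α i = (z : ℝ) / 2 ^ m) ∧
        (∀ j, |β j| ≤ (M : ℝ) * n ∧ ∃ m : ℕ, ∃ z : ℤ, β j = (z : ℝ) / 2 ^ m) ∧
        t = y + ∑ i, α i • (fun j' => ((u i j' : ℝ))) +
              ∑ j, β j • (fun j' => ((v j j' : ℝ)))) := by
  have hMM : M' ≤ M := hM ▸ le_max_left _ _
  have hx : ∀ k j, |(x k j : ℝ)| ≤ M := by
    intro k j
    have h1 : (x k j).natAbs ≤ M := by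
      rw [hM]
      refine le_trans ?_ (le_max_right _ _)
      refine le_trans ?_ (Finset.le_sup (f := fun k : Fin l =>
        Finset.univ.sup fun j : Fin d => (x k j).natAbs) (Finset.mem_univ k))
      exact Finset.le_sup (f := fun j : Fin d => (x k j).natAbs) (Finset.mem_univ j)
    have h2 : |x k j| ≤ (M : ℤ) := by rw [Int.abs_eq_natAbs]; exact_mod_cast h1
    exact_mod_cast h2
  refine and_iff_left_of_imp (fun h1 => ?_) |>.mpr ?_
  · intro n hn t ht ⟨m, hm⟩
    obtain ⟨y, α, β, hy, hα, hβ, e⟩ := h1 n hn m t ht hm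
    exact ⟨y, α, β, fun j => (hy j).1, ⟨m, fun j => (hy j).2⟩,
      fun i => ⟨(hα i).1, m, (hα i).2⟩, fun i => ⟨(hβ i).1, m, (hβ i).2⟩, e⟩
  · intro n hn m t ht hz
    have hpow : (0 : ℝ) < 2 ^ m := by positivity
    have hpow1 : (1 : ℝ) ≤ 2 ^ m := one_le_pow₀ (by norm_num)
    by_cases hc : M' ≤ n * 2 ^ m
    · choose z hz using hz
      have hzb : ∀ j, |z j| ≤ ((n * 2 ^ m : ℕ) : ℤ) := by
        intro j
        have h := ht j
        rw [hz j, abs_div, abs_of_pos hpow, div_le_iff₀ hpow] at h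
        exact_mod_cast h
      obtain ⟨k, α, β, hα, hβ, e⟩ := hcov _ hc z hzb
      have key : ∀ a : ℤ, |a| ≤ (M' : ℤ) * ((n * 2 ^ m : ℕ) : ℤ) →
          |(a : ℝ) / 2 ^ m| ≤ (M : ℝ) * n := by
        intro a ha
        have ha' : |(a : ℝ)| ≤ (M' : ℝ) * (n * 2 ^ m) := by exact_mod_cast ha
        rw [abs_div, abs_of_pos hpow, div_le_iff₀ hpow]
        have : (M' : ℝ) ≤ M := by exact_mod_cast hMM
        calc |(a : ℝ)| ≤ (M' : ℝ) * (n * 2 ^ m) := ha'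
          _ ≤ (M : ℝ) * (n * 2 ^ m) := by gcongr
          _ = _ := by ring
      refine ⟨fun j => (x k j : ℝ) / 2 ^ m, fun i => (α i : ℝ) / 2 ^ m,
        fun i => (β i : ℝ) / 2 ^ m, fun j => ⟨?_, _, rfl⟩,
        fun i => ⟨key _ (hα i), _, rfl⟩, fun i => ⟨key _ (hβ i), _, rfl⟩, ?_⟩
      · rw [abs_div, abs_of_pos hpow]
        exact (div_le_self (abs_nonneg _) hpow1).trans (hx k j)
      · funext j
        have ej : (z j : ℝ) = x k j + ∑ i, (α i : ℝ) * u i j + ∑ i, (β i : ℝ) * v i j := by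
          have := congrFun e j
          simp only [Pi.add_apply, Finset.sum_apply, Pi.smul_apply, smul_eq_mul] at this
          exact_mod_cast this
        simp only [Pi.add_apply, Finset.sum_apply, Pi.smul_apply, smul_eq_mul]
        rw [hz j, ej, add_div, add_div, Finset.sum_div, Finset.sum_div]
        simp only [div_mul_eq_mul_div]
    · push Not at hc
      have hnM : (n : ℝ) ≤ M := by
        have : n ≤ n * 2 ^ m := Nat.le_mul_of_pos_right _ (by positivity)
        exact_mod_cast (by omega : n ≤ M)
      refine ⟨t, 0, 0, fun j => ⟨(ht j).trans hnM, hz j⟩, fun i => ⟨?_, 0, by simp⟩,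
        fun i => ⟨?_, 0, by simp⟩, by simp⟩
      · simp only [Pi.zero_apply, abs_zero]; positivity
      · simp only [Pi.zero_apply, abs_zero]; positivity
end
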